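/- arXiv:1512.09174 — 2 statements merged into one kernel-verified Lean document; each statement's English description precedes it below -/
import Mathlib

section
/- Suppose f satisfies (H), is locally Lipschitz and odd, and that ∫₀^T |f(s)| ds → ∞ as T → ∞. Suppose the limits a = lim_{x→0} f(x)/x and A = lim_{x→∞} f(x)/x exist, and that either A < -π/2 < a or a < -π/2 < A. Then the equation x'(t) = f(x(t-1)) has a Kaplan–Yorke solution, i.e., an SOP solution x of minimal period 4 satisfying x(t) = -x(t-2) for all t ∈ ℝ. -/
/-!
Write `f(x) = -x r(x)` with `r` even, continuous and positive. If `(x, y)` solves the Hamiltonian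
system `x' = f(y)`, `y' = -f(x)` and a quarter of its period is `1`, the symmetry of the system
under rotation by a right angle forces `y(t) = x(t - 1)` and `x(t - 2) = -x(t)`, so `x` is a
Kaplan–Yorke solution. It remains to find an orbit whose quarter period is exactly `1`.

The potential of the spring with stiffness `r` is `x² m(x) / 2`, where `m` is a weighted mean of
`r` over `[0, x]`, so `x ↦ x √m(x)` is a diffeomorphism of the line, including at the origin. Let
`q` be its inverse and `k = q' > 0`. In the coordinates `x = q(ρ cos φ)`, `y = q(ρ sin φ)` the
system becomes `ρ' = 0` and `φ' = 1 / (k(ρ cos φ) k(ρ sin φ))`. Hence time is the integral of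
`k(ρ cos s) k(ρ sin s)` in the angle, with no singularity, and inverting it gives the whole orbit.

The quarter period, the integral over `[0, π/2]`, is continuous in `ρ`, equals `π / (2|a|)` at
`ρ = 0`, and tends to `π / (2|A|)` as `ρ → ∞` when `A < 0`. When `A = 0` it tends to infinity,
because `x` covers the distance `q(ρ)` at a speed that is `o(q(ρ))`. The intermediate value theorem
gives an orbit of quarter period `1`.
-/

open Set Filter

/-- Hypotheses (H): `f` is continuous, satisfies the negative feedback condition,
and is differentiable on a neighborhood of `0` with `f'(0) < 0`. -/
def HypH (f : ℝ → ℝ) : Prop :=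
  Continuous f ∧ (∀ x : ℝ, x ≠ 0 → x * f x < 0) ∧
    (∀ᶠ y in nhds (0 : ℝ), DifferentiableAt ℝ f y) ∧ deriv f 0 < 0

/-- A solution on `[-1,∞)` of the delay equation `x'(t) = f (x (t-1))`. -/
def IsSolOn (f x : ℝ → ℝ) : Prop :=
  ContinuousOn x (Ici (-1)) ∧ ∀ t : ℝ, 0 < t → HasDerivAt x (f (x (t - 1))) t

/-- Membership in the set `K`: `φ(-1) = 0`, `φ` nondecreasing on `[-1,0]`,
continuous there, and `|φ| ≤ M`. -/
def MemK (M : ℝ) (φ : ℝ → ℝ) : Prop :=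
  ContinuousOn φ (Icc (-1) 0) ∧ φ (-1) = 0 ∧ MonotoneOn φ (Icc (-1) 0) ∧
    ∀ s ∈ Icc (-1 : ℝ) 0, |φ s| ≤ M

/-- `T` is the minimal (positive) period of `p`. -/
def MinPeriod {α : Type*} (p : ℝ → α) (T : ℝ) : Prop :=
  0 < T ∧ (∀ t, p (t + T) = p t) ∧
    ∀ T' : ℝ, 0 < T' → (∀ t, p (t + T') = p t) → T ≤ T'

/-- A slowly oscillating periodic (SOP) solution of `x'(t) = f (x (t-1))`:
a nonconstant periodic differentiable solution any two of whose distinct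
zeros are separated by more than `1`. -/
def IsSOP (f p : ℝ → ℝ) : Prop :=
  (∀ t : ℝ, HasDerivAt p (f (p (t - 1))) t) ∧
    (∃ T : ℝ, 0 < T ∧ ∀ t, p (t + T) = p t) ∧
    (∃ t s : ℝ, p t ≠ p s) ∧
    ∀ z z' : ℝ, p z = 0 → p z' = 0 → z ≠ z' → 1 < |z - z'|

/-- A Kaplan–Yorke solution: an SOP solution of minimal period `4`
satisfying `x(t) = -x(t-2)`. -/
def IsKY (f x : ℝ → ℝ) : Prop :=
  IsSOP f x ∧ MinPeriod x 4 ∧ ∀ t : ℝ, x t = -x (t - 2)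

/-- Hypotheses (H') with constants `μ, β, σ`. -/
def HypH' (f : ℝ → ℝ) (μ β σ : ℝ) : Prop :=
  (∀ x : ℝ, |f x| ≤ μ) ∧ ∀ x : ℝ, β ≤ |x| → σ ≤ |f x|

/-- Hypotheses (H'') with constants `a, c, δ, γ`. -/
def HypH'' (f : ℝ → ℝ) (a c δ γ : ℝ) : Prop :=
  (∀ x : ℝ, f (-x) = -f x) ∧ (∀ x ∈ Icc (0 : ℝ) (2 * a), |f x| ≤ γ) ∧
    (∀ x ∈ Icc a (2 * a - c), f x = -γ) ∧ ∀ x ∈ Icc (2 * a) γ, f x = -δ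

/-- The minimal period of `p` equals `z'' - z` for three consecutive zeros
`z < z' < z''` of `p`. -/
def PeriodThreeZeros (p : ℝ → ℝ) : Prop :=
  ∃ z z' z'' : ℝ, z < z' ∧ z' < z'' ∧ p z = 0 ∧ p z' = 0 ∧ p z'' = 0 ∧
    (∀ t, t ∈ Ioo z z' ∪ Ioo z' z'' → p t ≠ 0) ∧ MinPeriod p (z'' - z)

section

open scoped Real Topology

open Real (cos sin)

/-! ### Real functions -/

lemma hasDerivAt_orderIso_symm (e : ℝ ≃o ℝ) {w : ℝ → ℝ} (he : ∀ x, HasDerivAt e (w x) x)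
    (hw : ∀ x, w x ≠ 0) (y : ℝ) : HasDerivAt e.symm (w (e.symm y))⁻¹ y :=
  (he _).of_local_left_inverse e.symm.continuous.continuousAt (hw _)
    (Eventually.of_forall e.apply_symm_apply)

lemma exists_abs_le_of_even_of_tendsto {k : ℝ → ℝ} (hk : Continuous k) (heven : k.Even) {l : ℝ}
    (hl : Tendsto k atTop (𝓝 l)) : ∃ C, ∀ u, |k u| ≤ C := by
  have hbdd := (hk.isBounded_range_iff_isBigO_atTop_of_even heven).2 (hl.isBigO_one ℝ)
  simpa using isBounded_iff_forall_norm_le.1 hbdd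

lemma hasDerivAt_zero_of_tendsto_div {f : ℝ → ℝ} (h0 : f 0 = 0) {a : ℝ}
    (ha : Tendsto (fun x => f x / x) (𝓝[≠] 0) (𝓝 a)) : HasDerivAt f a 0 :=
  hasDerivAt_iff_tendsto_slope.2 <| ha.congr fun x => by simp [slope_def_field, h0]

lemma exists_mul_le_add_mul_of_tendsto_zero {r : ℝ → ℝ} (hr : Continuous r)
    (h0 : Tendsto r atTop (𝓝 0)) {b : ℝ} (hb : 0 < b) :
    ∃ C, ∀ y, 0 ≤ y → y * r y ≤ C + b * y := by
  obtain ⟨X, hX⟩ := eventually_atTop.1 ((h0.eventually_lt_const hb).and (eventually_gt_atTop 0))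
  have hX0 : 0 < X := (hX X le_rfl).2
  obtain ⟨C, hC⟩ := (isCompact_Icc (a := 0) (b := X)).exists_bound_of_continuousOn
    (by fun_prop : Continuous fun y => y * r y).continuousOn
  have hC0 : 0 ≤ C := (norm_nonneg _).trans (hC 0 ⟨le_rfl, hX0.le⟩)
  refine ⟨C, fun y hy => ?_⟩
  rcases le_total X y with hXy | hyX
  · have := mul_le_mul_of_nonneg_left (hX y hXy).1.le hy
    linarith
  · have := (le_abs_self _).trans (hC y ⟨hy, hyX⟩)
    have := mul_nonneg hb.le hy
    linarith

/-! ### Mean stiffness and the energy coordinate -/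

/-- The mean of `r` over `[0, x]` with weight proportional to the distance from `0`, so that a
spring of stiffness `r` has potential `x ^ 2 * meanStiffness r x / 2`. The integral is rescaled to
`[0, 1]` to be meaningful at `x = 0`. -/
noncomputable def meanStiffness (r : ℝ → ℝ) (x : ℝ) : ℝ :=
  ∫ s in (0 : ℝ)..1, 2 * s * r (x * s)

/-- The signed square root of twice the potential of a spring of stiffness `r`. -/
noncomputable def energyCoord (r : ℝ → ℝ) (x : ℝ) : ℝ :=
  x * √(meanStiffness r x)

section MeanStiffness

variable {r : ℝ → ℝ}

lemma sq_mul_meanStiffness (r : ℝ → ℝ) (x : ℝ) :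
    x ^ 2 * meanStiffness r x = 2 * ∫ t in (0 : ℝ)..x, t * r t := by
  have hscale := intervalIntegral.smul_integral_comp_mul_left (a := 0) (b := 1)
    (fun t => t * r t) x
  rw [mul_zero, mul_one, smul_eq_mul] at hscale
  rw [← hscale, meanStiffness, ← mul_assoc, ← intervalIntegral.integral_const_mul,
    ← intervalIntegral.integral_const_mul]
  congr 1 with s
  ring

lemma continuous_meanStiffness (hr : Continuous r) : Continuous (meanStiffness r) := by
  refine intervalIntegral.continuous_parametric_intervalIntegral_of_continuous' ?_ _ _
  simp only [Function.uncurry_def]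
  fun_prop

lemma meanStiffness_pos (hr : Continuous r) (hpos : ∀ x, 0 < r x) (x : ℝ) :
    0 < meanStiffness r x :=
  intervalIntegral.intervalIntegral_pos_of_pos_on
    (Continuous.intervalIntegrable (by fun_prop) _ _)
    (fun s hs => mul_pos (mul_pos two_pos hs.1) (hpos _)) one_pos

lemma meanStiffness_even (heven : r.Even) : (meanStiffness r).Even := fun x => by
  simp only [meanStiffness, neg_mul, heven.eq]

lemma integral_two_mul_mul_const (c : ℝ) : ∫ s in (0 : ℝ)..1, 2 * s * c = c := by
  rw [intervalIntegral.integral_mul_const, intervalIntegral.integral_const_mul, integral_id]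
  ring

lemma meanStiffness_zero (r : ℝ → ℝ) : meanStiffness r 0 = r 0 := by
  simp only [meanStiffness, zero_mul, integral_two_mul_mul_const]

lemma tendsto_meanStiffness (hr : Continuous r) (heven : r.Even) {α : ℝ}
    (hα : Tendsto r atTop (𝓝 α)) : Tendsto (meanStiffness r) atTop (𝓝 α) := by
  obtain ⟨C, hC⟩ := exists_abs_le_of_even_of_tendsto hr heven hα
  rw [← integral_two_mul_mul_const α]
  refine intervalIntegral.tendsto_integral_filter_of_dominated_convergence (fun _ => 2 * C)
    (Eventually.of_forall fun x => Continuous.aestronglyMeasurable (by fun_prop))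
    (Eventually.of_forall fun x => Eventually.of_forall fun s hs => ?_)
    intervalIntegrable_const (Eventually.of_forall fun s hs => ?_)
  all_goals rw [uIoc_of_le zero_le_one] at hs
  · rw [Real.norm_eq_abs, abs_mul, abs_of_pos (mul_pos two_pos hs.1)]
    exact mul_le_mul (by linarith [hs.2]) (hC _) (abs_nonneg _) zero_le_two
  · exact (hα.comp (tendsto_id.atTop_mul_const hs.1)).const_mul _

lemma hasDerivAt_meanStiffness (hr : Continuous r) {x : ℝ} (hx : x ≠ 0) :
    HasDerivAt (meanStiffness r) (2 * (r x - meanStiffness r x) / x) x := by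
  have hint : HasDerivAt (fun y => 2 * ∫ t in (0 : ℝ)..y, t * r t) (2 * (x * r x)) x :=
    ((continuous_id.mul hr).integral_hasStrictDerivAt 0 x).hasDerivAt.const_mul 2
  have hquot := hint.div (hasDerivAt_pow 2 x) (pow_ne_zero 2 hx)
  rw [← sq_mul_meanStiffness] at hquot
  refine (hquot.congr_of_eventuallyEq ?_).congr_deriv ?_
  · filter_upwards [isOpen_ne.mem_nhds hx] with y hy
    rw [Pi.div_apply, ← sq_mul_meanStiffness, mul_div_cancel_left₀ _ (pow_ne_zero 2 hy)]
  · push_cast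
    field_simp

lemma continuous_energyCoord (hr : Continuous r) : Continuous (energyCoord r) :=
  continuous_id.mul (continuous_meanStiffness hr).sqrt

lemma energyCoord_odd (heven : r.Even) : (energyCoord r).Odd := fun x => by
  rw [energyCoord, energyCoord, (meanStiffness_even heven).eq, neg_mul]

lemma hasDerivAt_energyCoord (hr : Continuous r) (hpos : ∀ x, 0 < r x) (x : ℝ) :
    HasDerivAt (energyCoord r) (r x / √(meanStiffness r x)) x := by
  have hm := meanStiffness_pos hr hpos
  have hmc := continuous_meanStiffness hr
  refine hasDerivAt_of_hasDerivAt_of_ne' (x := 0) (g := fun y => r y / √(meanStiffness r y))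
    (fun y hy => ?_) (continuous_energyCoord hr).continuousAt
    (hr.div hmc.sqrt fun y => (Real.sqrt_pos.2 (hm y)).ne').continuousAt x
  refine ((hasDerivAt_id y).mul
    ((hasDerivAt_meanStiffness hr hy).sqrt (hm y).ne')).congr_deriv ?_
  have hsqrt := (Real.sqrt_pos.2 (hm y)).ne'
  simp only [id_eq]
  field_simp
  rw [Real.sq_sqrt (hm y).le]
  ring

lemma tendsto_energyCoord_atTop
    (h : Tendsto (fun T => ∫ t in (0 : ℝ)..T, t * r t) atTop atTop) :
    Tendsto (energyCoord r) atTop atTop := by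
  refine (Real.tendsto_sqrt_atTop.comp (h.const_mul_atTop two_pos)).congr' ?_
  filter_upwards [eventually_ge_atTop 0] with x hx
  rw [Function.comp_apply, ← sq_mul_meanStiffness, Real.sqrt_mul (sq_nonneg x), Real.sqrt_sq hx,
    energyCoord]

end MeanStiffness

/-! ### The quarter period -/

/-- The time in which the angle `φ` grows from `0` to `π / 2` when
`φ' = 1 / (k (ρ cos φ) * k (ρ sin φ))`. -/
noncomputable def quarterPeriod (k : ℝ → ℝ) (ρ : ℝ) : ℝ :=
  ∫ s in (0 : ℝ)..(π / 2), k (ρ * cos s) * k (ρ * sin s)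

section QuarterPeriod

variable {k : ℝ → ℝ}

lemma continuous_quarterPeriod (hk : Continuous k) : Continuous (quarterPeriod k) := by
  refine intervalIntegral.continuous_parametric_intervalIntegral_of_continuous' ?_ _ _
  simp only [Function.uncurry_def]
  fun_prop

lemma quarterPeriod_zero (k : ℝ → ℝ) : quarterPeriod k 0 = π / 2 * k 0 ^ 2 := by
  simp only [quarterPeriod, zero_mul, intervalIntegral.integral_const, smul_eq_mul, sub_zero, sq]

lemma tendsto_quarterPeriod (hk : Continuous k) (heven : k.Even) {l : ℝ}
    (hl : Tendsto k atTop (𝓝 l)) : Tendsto (quarterPeriod k) atTop (𝓝 (π / 2 * l ^ 2)) := by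
  obtain ⟨C, hC⟩ := exists_abs_le_of_even_of_tendsto hk heven hl
  have hconst : ∫ _ in (0 : ℝ)..(π / 2), l * l = π / 2 * l ^ 2 := by
    rw [intervalIntegral.integral_const, sub_zero, smul_eq_mul, sq]
  rw [← hconst]
  refine intervalIntegral.tendsto_integral_filter_of_dominated_convergence (fun _ => C * C)
    (Eventually.of_forall fun ρ => Continuous.aestronglyMeasurable (by fun_prop))
    (Eventually.of_forall fun ρ => Eventually.of_forall fun s _ => ?_)
    intervalIntegrable_const ?_
  · rw [Real.norm_eq_abs, abs_mul]
    exact mul_le_mul (hC _) (hC _) (abs_nonneg _) ((abs_nonneg _).trans (hC 0))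
  · filter_upwards [MeasureTheory.volume.ae_ne (π / 2)] with s hne hs
    rw [uIoc_of_le Real.pi_div_two_pos.le] at hs
    have hcos : 0 < cos s :=
      Real.cos_pos_of_mem_Ioo ⟨by linarith [Real.pi_pos, hs.1], hs.2.lt_of_ne hne⟩
    have hsin : 0 < sin s := Real.sin_pos_of_pos_of_lt_pi hs.1 (by linarith [Real.pi_pos, hs.2])
    exact (hl.comp (tendsto_id.atTop_mul_const hcos)).mul
      (hl.comp (tendsto_id.atTop_mul_const hsin))

end QuarterPeriod

/-! ### Kaplan–Yorke solutions from a phase -/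

lemma exists_phase {w : ℝ → ℝ} (hw : Continuous w) (hpos : ∀ s, 0 < w s) {c : ℝ} (hc : 0 < c)
    (hper : w.Periodic c) (hone : ∫ s in (0 : ℝ)..c, w s = 1) :
    ∃ φ : ℝ → ℝ, StrictMono φ ∧ φ 0 = 0 ∧ (∀ t, φ (t + 1) = φ t + c) ∧
      ∀ t, HasDerivAt φ (w (φ t))⁻¹ t := by
  have hint := hw.intervalIntegrable (μ := MeasureTheory.volume)
  let clock : ℝ → ℝ := fun θ => ∫ s in (0 : ℝ)..θ, w s
  have hderiv : ∀ θ, HasDerivAt clock (w θ) θ := fun θ =>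
    (hw.integral_hasStrictDerivAt 0 θ).hasDerivAt
  have hsurj : Function.Surjective clock :=
    (intervalIntegral.continuous_primitive hint 0).surjective
      (hper.tendsto_atTop_intervalIntegral_of_pos' (hint 0 c) hpos hc)
      (hper.tendsto_atBot_intervalIntegral_of_pos' (hint 0 c) hpos hc)
  let e : ℝ ≃o ℝ := (strictMono_of_hasDerivAt_pos hderiv hpos).orderIsoOfSurjective clock hsurj
  have hadd : ∀ θ, e (θ + c) = e θ + 1 := fun θ => by
    have h := hper.intervalIntegral_add_eq_add 0 θ hint
    rwa [zero_add, hone] at h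
  refine ⟨e.symm, e.symm.strictMono, ?_, fun t => ?_,
    hasDerivAt_orderIso_symm e hderiv fun θ => (hpos θ).ne'⟩
  · exact e.symm_apply_eq.2 intervalIntegral.integral_same.symm
  · rw [e.symm_apply_eq, hadd, e.apply_symm_apply]

section Phase

variable {Q φ : ℝ → ℝ}

lemma antiperiodic_comp_cos (hQodd : Q.Odd) (hφ : ∀ t, φ (t + 2) = φ t + π) :
    Function.Antiperiodic (fun t => Q (cos (φ t))) 2 := fun t => by
  simp only [hφ, Real.cos_add_pi, hQodd.eq]

lemma add_two_le_of_zeros_comp_cos (hQ : Function.Injective Q) (hQodd : Q.Odd)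
    (hmono : StrictMono φ) (hφ : ∀ t, φ (t + 2) = φ t + π) {z z' : ℝ} (hz : Q (cos (φ z)) = 0)
    (hz' : Q (cos (φ z')) = 0) (hlt : z < z') : z + 2 ≤ z' := by
  by_contra! hclose
  have hpos : 0 < φ z' - φ z := sub_pos.2 (hmono hlt)
  have hltpi : φ z' - φ z < π := by linarith [hmono hclose, hφ z]
  have hsin : sin (φ z' - φ z) = 0 := by
    rw [Real.sin_sub, (hQ.eq_iff' hQodd.map_zero).1 hz, (hQ.eq_iff' hQodd.map_zero).1 hz',
      mul_zero, zero_mul, sub_zero]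
  exact (Real.sin_pos_of_pos_of_lt_pi hpos hltpi).ne' hsin

lemma minPeriod_four_comp_cos (hQ : Function.Injective Q) (hmono : StrictMono φ) (h0 : φ 0 = 0)
    (hφ : ∀ t, φ (t + 2) = φ t + π) : MinPeriod (fun t => Q (cos (φ t))) 4 := by
  have hφ4 : ∀ t, φ (t + 4) = φ t + 2 * π := fun t => by
    rw [show t + 4 = t + 2 + 2 by ring, hφ, hφ]
    ring
  refine ⟨by norm_num, fun t => by simp only [hφ4, Real.cos_add_two_pi], fun T hT hper => ?_⟩
  by_contra! hlt
  have hcos : cos (φ T) = 1 := by simpa [h0] using hQ (hper 0)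
  have hpos : 0 < φ T := h0 ▸ hmono hT
  have hφ4zero : φ 4 = 2 * π := by simpa [h0] using hφ4 0
  have hlt2pi : φ T < 2 * π := hφ4zero ▸ hmono hlt
  exact hpos.ne' ((Real.cos_eq_one_iff_of_lt_of_lt (by linarith) hlt2pi).1 hcos)

lemma isKY_comp_cos {f : ℝ → ℝ} (hQ : Function.Injective Q) (hQodd : Q.Odd)
    (hmono : StrictMono φ) (h0 : φ 0 = 0) (hφ : ∀ t, φ (t + 2) = φ t + π)
    (hderiv : ∀ t, HasDerivAt (fun t => Q (cos (φ t))) (f (Q (cos (φ (t - 1))))) t) :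
    IsKY f fun t => Q (cos (φ t)) := by
  have hanti := antiperiodic_comp_cos hQodd hφ
  have hmin := minPeriod_four_comp_cos hQ hmono h0 hφ
  refine ⟨⟨hderiv, ⟨4, hmin.1, hmin.2.1⟩, ⟨0, 2, fun heq => ?_⟩, fun z z' hz hz' hne => ?_⟩, hmin,
    fun t => ?_⟩
  · have hzero : Q (cos (φ 0)) = 0 := by linarith [hanti.eq.symm.trans heq.symm]
    simpa [h0] using (hQ.eq_iff' hQodd.map_zero).1 hzero
  · rw [lt_abs]
    rcases hne.lt_or_gt with hlt | hlt
    · exact .inr (by linarith [add_two_le_of_zeros_comp_cos hQ hQodd hmono hφ hz hz' hlt])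
    · exact .inl (by linarith [add_two_le_of_zeros_comp_cos hQ hQodd hmono hφ hz' hz hlt])
  · simpa using hanti (t - 2)

end Phase

/-! ### Nonlinear springs -/

/-- `r` is the stiffness of a symmetric nonlinear spring: the restoring force at displacement `x` is
`-(x * r x)`. The last field says that the potential is unbounded. -/
structure IsStiffness (r : ℝ → ℝ) : Prop where
  continuous : Continuous r
  pos : ∀ x, 0 < r x
  even : r.Even
  tendsto_integral : Tendsto (fun T => ∫ t in (0 : ℝ)..T, t * r t) atTop atTop

namespace IsStiffness

variable {r : ℝ → ℝ} (hr : IsStiffness r)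

include hr

lemma strictMono_energyCoord : StrictMono (energyCoord r) :=
  strictMono_of_hasDerivAt_pos (hasDerivAt_energyCoord hr.continuous hr.pos) fun x =>
    div_pos (hr.pos x) (Real.sqrt_pos.2 (meanStiffness_pos hr.continuous hr.pos x))

lemma surjective_energyCoord : Function.Surjective (energyCoord r) := by
  have htop := tendsto_energyCoord_atTop hr.tendsto_integral
  refine (continuous_energyCoord hr.continuous).surjective htop ?_
  refine (tendsto_neg_atTop_atBot.comp (htop.comp tendsto_neg_atBot_atTop)).congr fun x => ?_
  simp only [Function.comp_apply, (energyCoord_odd hr.even).eq, neg_neg]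

/-- The energy coordinate as an order isomorphism of the line; its inverse is the map `q` in the
header. -/
noncomputable def energyIso : ℝ ≃o ℝ :=
  hr.strictMono_energyCoord.orderIsoOfSurjective _ hr.surjective_energyCoord

/-- The derivative of the inverse energy coordinate, the function `k` in the header. -/
noncomputable def slowness (u : ℝ) : ℝ :=
  √(meanStiffness r (hr.energyIso.symm u)) / r (hr.energyIso.symm u)

lemma hasDerivAt_energyIso_symm (u : ℝ) : HasDerivAt hr.energyIso.symm (hr.slowness u) u := by
  have hm := meanStiffness_pos hr.continuous hr.pos
  rw [slowness, ← inv_div]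
  exact hasDerivAt_orderIso_symm hr.energyIso (hasDerivAt_energyCoord hr.continuous hr.pos)
    (fun x => (div_pos (hr.pos x) (Real.sqrt_pos.2 (hm x))).ne') u

lemma energyIso_symm_odd : Function.Odd hr.energyIso.symm := fun u => by
  rw [hr.energyIso.symm_apply_eq]
  exact ((energyCoord_odd hr.even _).trans
    (congrArg Neg.neg (hr.energyIso.apply_symm_apply u))).symm

lemma continuous_slowness : Continuous hr.slowness :=
  ((continuous_meanStiffness hr.continuous).sqrt.div hr.continuous fun x => (hr.pos x).ne').comp
    hr.energyIso.symm.continuous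

lemma slowness_pos (u : ℝ) : 0 < hr.slowness u :=
  div_pos (Real.sqrt_pos.2 (meanStiffness_pos hr.continuous hr.pos _)) (hr.pos _)

lemma slowness_even : hr.slowness.Even := fun u => by
  simp only [slowness, hr.energyIso_symm_odd.eq, (meanStiffness_even hr.even).eq, hr.even.eq]

lemma slowness_mul_force (u : ℝ) :
    hr.slowness u * (hr.energyIso.symm u * r (hr.energyIso.symm u)) = u := by
  calc _ = energyCoord r (hr.energyIso.symm u) := by
        have := (hr.pos (hr.energyIso.symm u)).ne'
        rw [slowness, energyCoord]
        field_simp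
    _ = u := hr.energyIso.apply_symm_apply u

lemma slowness_zero : hr.slowness 0 = (√(r 0))⁻¹ := by
  rw [slowness, hr.energyIso_symm_odd.map_zero, meanStiffness_zero, Real.sqrt_div_self]

lemma tendsto_slowness {α : ℝ} (hα : Tendsto r atTop (𝓝 α)) (hα0 : 0 < α) :
    Tendsto hr.slowness atTop (𝓝 (√α)⁻¹) := by
  rw [← Real.sqrt_div_self]
  exact ((tendsto_meanStiffness hr.continuous hr.even hα).sqrt.div hα hα0.ne').comp
    hr.energyIso.symm.tendsto_atTop

lemma exists_isKY {f : ℝ → ℝ} (hf : ∀ x, f x = -(x * r x)) {ρ : ℝ} (hρ : ρ ≠ 0)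
    (hone : quarterPeriod hr.slowness ρ = 1) : ∃ x : ℝ → ℝ, IsKY f x := by
  let w : ℝ → ℝ := fun s => hr.slowness (ρ * cos s) * hr.slowness (ρ * sin s)
  have hk := hr.continuous_slowness
  have hper : w.Periodic (π / 2) := fun s => by
    simp only [w, Real.cos_add_pi_div_two, Real.sin_add_pi_div_two, mul_neg, hr.slowness_even.eq,
      mul_comm]
  obtain ⟨φ, hmono, hφ0, hφ1, hφd⟩ := exists_phase (w := w) (by fun_prop)
    (fun s => mul_pos (hr.slowness_pos _) (hr.slowness_pos _)) Real.pi_div_two_pos hper hone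
  have hφ2 : ∀ t, φ (t + 2) = φ t + π := fun t => by
    rw [← one_add_one_eq_two, ← add_assoc, hφ1, hφ1]
    ring
  have hdelay : ∀ t, cos (φ (t - 1)) = sin (φ t) := fun t => by
    rw [← sub_add_cancel t 1, hφ1, add_sub_cancel_right, Real.sin_add_pi_div_two]
  refine ⟨_, isKY_comp_cos (Q := fun u => hr.energyIso.symm (ρ * u))
    (hr.energyIso.symm.injective.comp (mul_right_injective₀ hρ))
    (fun u => by simp only [mul_neg, hr.energyIso_symm_odd.eq]) hmono hφ0 hφ2 fun t => ?_⟩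
  refine ((hr.hasDerivAt_energyIso_symm _).comp t ((hφd t).cos.const_mul ρ)).congr_deriv ?_
  have hforce := hr.slowness_mul_force (ρ * sin (φ t))
  have hcos := (hr.slowness_pos (ρ * cos (φ t))).ne'
  have hsin := (hr.slowness_pos (ρ * sin (φ t))).ne'
  rw [hdelay, hf]
  simp only [w]
  field_simp
  linarith

/-- On the orbit of energy `ρ ^ 2 / 2` the first coordinate covers the distance `q(ρ)` in a quarter
period, at speed at most `M`. -/
lemma energyIso_symm_le_mul_quarterPeriod {ρ M : ℝ} (hρ : 0 ≤ ρ)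
    (hM : ∀ y, 0 ≤ y → y ≤ hr.energyIso.symm ρ → y * r y ≤ M) :
    hr.energyIso.symm ρ ≤ M * quarterPeriod hr.slowness ρ := by
  have hk := hr.continuous_slowness
  have hq0 := hr.energyIso_symm_odd.map_zero
  have hdist : ∫ s in (0 : ℝ)..(π / 2), hr.slowness (ρ * cos s) * (ρ * sin s) =
      hr.energyIso.symm ρ := by
    have hderiv : ∀ s, HasDerivAt (fun s => -hr.energyIso.symm (ρ * cos s))
        (hr.slowness (ρ * cos s) * (ρ * sin s)) s := fun s =>
      ((hr.hasDerivAt_energyIso_symm _).comp s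
        ((Real.hasDerivAt_cos s).const_mul ρ)).neg.congr_deriv (by ring)
    rw [intervalIntegral.integral_eq_sub_of_hasDerivAt (fun s _ => hderiv s)
      (Continuous.intervalIntegrable (by fun_prop) _ _)]
    simp [hq0]
  rw [← hdist, quarterPeriod, ← intervalIntegral.integral_const_mul]
  refine intervalIntegral.integral_mono_on Real.pi_div_two_pos.le
    (Continuous.intervalIntegrable (by fun_prop) _ _)
    (Continuous.intervalIntegrable (by fun_prop) _ _) fun s hs => ?_
  have hsin : 0 ≤ sin s :=
    Real.sin_nonneg_of_nonneg_of_le_pi hs.1 (by linarith [hs.2, Real.pi_pos])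
  have hforce := hM (hr.energyIso.symm (ρ * sin s))
    (hq0 ▸ hr.energyIso.symm.monotone (mul_nonneg hρ hsin))
    (hr.energyIso.symm.monotone (mul_le_of_le_one_right hρ (Real.sin_le_one s)))
  have hspeed : ρ * sin s ≤ hr.slowness (ρ * sin s) * M := by
    simpa only [hr.slowness_mul_force] using
      mul_le_mul_of_nonneg_left hforce (hr.slowness_pos (ρ * sin s)).le
  calc _ ≤ hr.slowness (ρ * cos s) * (hr.slowness (ρ * sin s) * M) :=
        mul_le_mul_of_nonneg_left hspeed (hr.slowness_pos _).le
    _ = _ := by ring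

lemma tendsto_quarterPeriod_atTop_of_tendsto_zero (h0 : Tendsto r atTop (𝓝 0)) :
    Tendsto (quarterPeriod hr.slowness) atTop atTop := by
  refine tendsto_atTop.2 fun N => ?_
  let b : ℝ := (2 * (|N| + 1))⁻¹
  have hb : 0 < b := by positivity
  obtain ⟨C, hC⟩ := exists_mul_le_add_mul_of_tendsto_zero hr.continuous h0 hb
  have hfar := hr.energyIso.symm.tendsto_atTop.eventually_ge_atTop (C / b)
  have hpos := hr.energyIso.symm.tendsto_atTop.eventually_gt_atTop 0
  filter_upwards [hfar, hpos, eventually_ge_atTop 0] with ρ hCρ hqpos hρ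
  rw [div_le_iff₀ hb] at hCρ
  have hdist := hr.energyIso_symm_le_mul_quarterPeriod hρ
    (M := 2 * b * hr.energyIso.symm ρ) fun y hy hyρ => by
      linarith [hC y hy, mul_le_mul_of_nonneg_left hyρ hb.le]
  have hperiod : 1 ≤ 2 * b * quarterPeriod hr.slowness ρ := by
    refine le_of_mul_le_mul_right ?_ hqpos
    linarith
  have h2b : 2 * b = (|N| + 1)⁻¹ := by simp only [b]; field_simp
  rw [h2b, inv_mul_eq_div, one_le_div (by positivity)] at hperiod
  linarith [le_abs_self N]

lemma quarterPeriod_slowness_zero : quarterPeriod hr.slowness 0 = π / 2 / r 0 := by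
  rw [quarterPeriod_zero, slowness_zero, inv_pow, Real.sq_sqrt (hr.pos 0).le, ← div_eq_mul_inv]

lemma tendsto_quarterPeriod_slowness {α : ℝ} (hα : Tendsto r atTop (𝓝 α)) (hα0 : 0 < α) :
    Tendsto (quarterPeriod hr.slowness) atTop (𝓝 (π / 2 / α)) := by
  have h := tendsto_quarterPeriod hr.continuous_slowness hr.slowness_even
    (hr.tendsto_slowness hα hα0)
  rwa [inv_pow, Real.sq_sqrt hα0.le, ← div_eq_mul_inv] at h

lemma eventually_quarterPeriod_lt_one {α : ℝ} (hα : Tendsto r atTop (𝓝 α)) (hlt : π / 2 < α) :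
    ∀ᶠ ρ in atTop, quarterPeriod hr.slowness ρ < 1 := by
  have hα0 : 0 < α := Real.pi_div_two_pos.trans hlt
  exact (hr.tendsto_quarterPeriod_slowness hα hα0).eventually_lt_const ((div_lt_one hα0).2 hlt)

lemma eventually_one_lt_quarterPeriod {α : ℝ} (hα : Tendsto r atTop (𝓝 α)) (hlt : α < π / 2) :
    ∀ᶠ ρ in atTop, 1 < quarterPeriod hr.slowness ρ := by
  have hα0 : 0 ≤ α := ge_of_tendsto' hα fun x => (hr.pos x).le
  rcases hα0.eq_or_lt with rfl | hα0
  · exact (hr.tendsto_quarterPeriod_atTop_of_tendsto_zero hα).eventually_gt_atTop 1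
  · exact (hr.tendsto_quarterPeriod_slowness hα hα0).eventually_const_lt ((one_lt_div hα0).2 hlt)

lemma exists_quarterPeriod_eq_one {α : ℝ} (hα : Tendsto r atTop (𝓝 α))
    (hcross : (π / 2 < α ∧ r 0 < π / 2) ∨ (π / 2 < r 0 ∧ α < π / 2)) :
    ∃ ρ, ρ ≠ 0 ∧ quarterPeriod hr.slowness ρ = 1 := by
  have hcont := continuous_quarterPeriod hr.continuous_slowness
  have hzero := hr.quarterPeriod_slowness_zero
  have hne : quarterPeriod hr.slowness 0 ≠ 1 := by
    rw [hzero, Ne, div_eq_one_iff_eq (hr.pos 0).ne']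
    rcases hcross with h | h
    exacts [h.2.ne', h.1.ne]
  obtain ⟨ρ, hρ⟩ : 1 ∈ range (quarterPeriod hr.slowness) := by
    rcases hcross with ⟨hαlt, h0⟩ | ⟨h0, hαlt⟩
    · obtain ⟨R, hR⟩ := (hr.eventually_quarterPeriod_lt_one hα hαlt).exists
      exact mem_range_of_exists_le_of_exists_ge hcont ⟨R, hR.le⟩
        ⟨0, hzero ▸ ((one_lt_div (hr.pos 0)).2 h0).le⟩
    · obtain ⟨R, hR⟩ := (hr.eventually_one_lt_quarterPeriod hα hαlt).exists
      exact mem_range_of_exists_le_of_exists_ge hcont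
        ⟨0, hzero ▸ ((div_lt_one (hr.pos 0)).2 h0).le⟩ ⟨R, hR.le⟩
  exact ⟨ρ, fun h => hne (h ▸ hρ), hρ⟩

end IsStiffness

lemma isStiffness_neg_dslope {f : ℝ → ℝ} (hf : Continuous f)
    (hneg : ∀ x : ℝ, x ≠ 0 → x * f x < 0) (hodd : f.Odd)
    (hint : Tendsto (fun T => ∫ s in (0 : ℝ)..T, |f s|) atTop atTop) {a : ℝ} (ha0 : a < 0)
    (ha : HasDerivAt f a 0) : IsStiffness (-dslope f 0) where
  continuous := by
    refine (continuous_iff_continuousAt.2 fun x => ?_).neg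
    rcases eq_or_ne x 0 with rfl | hx
    · exact continuousAt_dslope_same.2 ha.differentiableAt
    · exact (continuousAt_dslope_of_ne hx).2 hf.continuousAt
  pos x := by
    rcases eq_or_ne x 0 with rfl | hx
    · simpa [ha.deriv] using ha0
    · rw [Pi.neg_apply, dslope_of_ne _ hx, slope_def_field, hodd.map_zero, sub_zero, sub_zero,
        neg_pos, ← mul_div_mul_left _ _ hx]
      exact div_neg_of_neg_of_pos (hneg x hx) (mul_self_pos.2 hx)
  even x := by
    rcases eq_or_ne x 0 with rfl | hx
    · simp
    · simp [dslope_of_ne, hx, slope_def_field, hodd.map_zero, hodd.eq, neg_div_neg_eq]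
  tendsto_integral := by
    refine hint.congr' ?_
    filter_upwards [eventually_ge_atTop 0] with T hT
    refine intervalIntegral.integral_congr fun s hs => ?_
    rw [uIcc_of_le hT] at hs
    have hforce : s * dslope f 0 s = f s := by
      simpa [hodd.map_zero] using sub_smul_dslope f 0 s
    have hle : f s ≤ 0 := by
      rcases hs.1.eq_or_lt with rfl | hpos
      · exact hodd.map_zero.le
      · exact ((pos_iff_neg_of_mul_neg (hneg s hpos.ne')).1 hpos).le
    simp only [Pi.neg_apply, mul_neg, hforce, abs_of_nonpos hle]

theorem statement_3_general (f : ℝ → ℝ) (hf : Continuous f)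
    (hneg : ∀ x : ℝ, x ≠ 0 → x * f x < 0) (hodd : ∀ x : ℝ, f (-x) = -f x)
    (hint : Tendsto (fun T : ℝ => ∫ s in (0 : ℝ)..T, |f s|) atTop atTop)
    (a A : ℝ) (ha0 : a < 0) (ha : HasDerivAt f a 0)
    (hA : Tendsto (fun x : ℝ => f x / x) atTop (𝓝 A))
    (hcross : (A < -(π / 2) ∧ -(π / 2) < a) ∨ (a < -(π / 2) ∧ -(π / 2) < A)) :
    ∃ x : ℝ → ℝ, IsKY f x := by
  have hf0 : f 0 = 0 := Function.Odd.map_zero hodd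
  have hr := isStiffness_neg_dslope hf hneg hodd hint ha0 ha
  have hr0 : (-dslope f 0) 0 = -a := by rw [Pi.neg_apply, dslope_same, ha.deriv]
  have hrA : Tendsto (-dslope f 0) atTop (𝓝 (-A)) := by
    refine hA.neg.congr' ?_
    filter_upwards [eventually_ne_atTop 0] with x hx
    simp [dslope_of_ne, hx, slope_def_field, hf0]
  obtain ⟨ρ, hρ, hone⟩ := hr.exists_quarterPeriod_eq_one hrA <| by
    rw [hr0]
    exact hcross.imp (And.imp lt_neg_of_lt_neg neg_lt.1) (And.imp lt_neg_of_lt_neg neg_lt.1)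
  refine hr.exists_isKY (fun x => ?_) hρ hone
  simpa [hf0] using (sub_smul_dslope f 0 x).symm

end

theorem statement_3 (f : ℝ → ℝ) (hH : HypH f) (hlip : LocallyLipschitz f)
    (hodd : ∀ x : ℝ, f (-x) = -f x)
    (hint : Tendsto (fun T : ℝ => ∫ s in (0 : ℝ)..T, |f s|) atTop atTop)
    (a A : ℝ)
    (ha : Tendsto (fun x : ℝ => f x / x) (nhdsWithin 0 {(0 : ℝ)}ᶜ) (nhds a))
    (hA : Tendsto (fun x : ℝ => f x / x) atTop (nhds A))
    (hcross : (A < -(Real.pi / 2) ∧ -(Real.pi / 2) < a) ∨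
      (a < -(Real.pi / 2) ∧ -(Real.pi / 2) < A)) :
    ∃ x : ℝ → ℝ, IsKY f x := by
  have hderiv := hasDerivAt_zero_of_tendsto_div (Function.Odd.map_zero hodd) ha
  exact statement_3_general f hH.1 hH.2.1 hodd hint a A (hderiv.deriv ▸ hH.2.2.2) hderiv hA hcross
end

section
/- Let f : ℝ → ℝ be continuous, locally Lipschitz, odd, and satisfy the negative feedback condition x·f(x) < 0 for all x ≠ 0. Let (u, v) : ℝ → ℝ² be a nonconstant solution of the planar system u' = f(v), v' = -f(u) with minimal period 4. Then x := u is a periodic solution of the delay equation, i.e., x'(t) = f(x(t-1)) for all t ∈ ℝ, x has minimal period 4, and x(t) = -x(t-2) for all t ∈ ℝ. -/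
/-!
Since `f` is odd, the quarter turn `(u, v) ↦ (-v, u)` maps solutions of the planar system to
solutions. The energy `F u + F v`, with `F` the primitive of `f`, is conserved, and `F` is even and
strictly decreasing on `[0, ∞)`, so an orbit meets all four half-axes at the same distance from the
origin. Start on the positive `v`-axis and let `s` be the time until `v` first vanishes. On the way
`u` decreases, so the orbit has moved to the negative `u`-axis: the solution has performed a quarter
turn, and by uniqueness advancing the solution by `s` turns the whole solution by a quarter.
Hence `4 * s` is a period. As `u` stays negative until two quarter turns are completed, the minimal
period `T` exceeds `2 * s`; then `4 * s - T` is less than `T`, so it is not a positive period, and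
`T = 4 * s`. The delay equation is the first equation of the system with `v t = u (t - s)` inserted.
-/

open Set Filter

/-- The negative feedback condition: `f` points towards the origin everywhere off the origin. -/
def NegFeedback (f : ℝ → ℝ) : Prop :=
  ∀ x : ℝ, x ≠ 0 → x * f x < 0

/-- The primitive of `f` vanishing at `0`. The planar system associated to `f` is Hamiltonian with
energy `potential f u + potential f v`. -/
noncomputable def potential (f : ℝ → ℝ) (x : ℝ) : ℝ :=
  ∫ y in (0 : ℝ)..x, f y

/-- `(u, v)` is a solution on all of `ℝ` of the planar system associated to `f`. -/
structure IsPlanarSolution (f u v : ℝ → ℝ) : Prop where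
  hasDerivAt_fst (t : ℝ) : HasDerivAt u (f (v t)) t
  hasDerivAt_snd (t : ℝ) : HasDerivAt v (-f (u t)) t

/-- Advancing the curve `(u, v)` by the time `s` is the same as applying to it the quarter turn
`(x, y) ↦ (-y, x)`. -/
def QuarterTurnShift (u v : ℝ → ℝ) (s : ℝ) : Prop :=
  ∀ t : ℝ, u (t + s) = -v t ∧ v (t + s) = u t

namespace MinPeriod

variable {α : Type*} {p : ℝ → α} {T : ℝ}

lemma ne_const (h : MinPeriod p T) (c : α) : p ≠ fun _ => c := by
  rintro rfl
  linarith [h.1, h.2.2 (T / 2) (half_pos h.1) fun _ => rfl]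

lemma eq_of_periodic_of_lt_two_mul (h : MinPeriod p T) {S : ℝ} (hS : Function.Periodic p S)
    (hS0 : 0 < S) (hST : S < 2 * T) : S = T := by
  obtain ⟨-, hT, hmin⟩ := h
  have hdiff : Function.Periodic p (S - T) := hS.sub_period hT
  by_contra! hne
  have hlt : T < S := (hmin S hS0 hS).lt_of_ne' hne
  linarith [hmin (S - T) (sub_pos.2 hlt) hdiff]

end MinPeriod

lemma eq_of_hasDerivAt_of_locallyLipschitz {E : Type*} [NormedAddCommGroup E] [NormedSpace ℝ E]
    {X : E → E} (hX : LocallyLipschitz X) {y z : ℝ → E} (hy : ∀ t, HasDerivAt y (X (y t)) t)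
    (hz : ∀ t, HasDerivAt z (X (z t)) t) {t₀ : ℝ} (h₀ : y t₀ = z t₀) : y = z := by
  ext t
  obtain ⟨a, b, ht, ht₀⟩ : ∃ a b, t ∈ Ioo a b ∧ t₀ ∈ Ioo a b :=
    ⟨min t t₀ - 1, max t t₀ + 1, by grind⟩
  have hcompact {w : ℝ → E} (hw : ∀ t, HasDerivAt w (X (w t)) t) : IsCompact (w '' Icc a b) :=
    isCompact_Icc.image_of_continuousOn (HasDerivAt.continuousOn fun t _ => hw t)
  obtain ⟨K, hK⟩ := LocallyLipschitzOn.exists_lipschitzOnWith_of_compact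
    ((hcompact hy).union (hcompact hz)) hX.locallyLipschitzOn
  exact ODE_solution_unique_of_mem_Ioo (v := fun _ => X) (fun _ _ => hK) ht₀
    (fun t ht => ⟨hy t, .inl (mem_image_of_mem y (Ioo_subset_Icc_self ht))⟩)
    (fun t ht => ⟨hz t, .inr (mem_image_of_mem z (Ioo_subset_Icc_self ht))⟩) h₀ ht

lemma exists_eq_zero_forall_Ico_pos {g : ℝ → ℝ} {a b : ℝ} (hg : ContinuousOn g (Icc a b))
    (hab : a ≤ b) (ha : 0 < g a) (hb : g b = 0) :
    ∃ c ∈ Ioc a b, g c = 0 ∧ ∀ t ∈ Ico a c, 0 < g t := by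
  have hclosed : IsClosed (Icc a b ∩ g ⁻¹' {0}) :=
    hg.preimage_isClosed_of_isClosed isClosed_Icc isClosed_singleton
  obtain ⟨c, ⟨⟨hac, hcb⟩, hc⟩, hmin⟩ :=
    (isCompact_Icc.of_isClosed_subset hclosed inter_subset_left).exists_isLeast
      ⟨b, right_mem_Icc.2 hab, hb⟩
  have hne : a ≠ c := by
    rintro rfl
    exact ha.ne' hc
  refine ⟨c, ⟨hac.lt_of_ne hne, hcb⟩, hc, fun t ⟨hat, htc⟩ => ?_⟩
  by_contra! ht
  obtain ⟨r, ⟨har, hrt⟩, hr⟩ := intermediate_value_Icc' hat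
    (hg.mono (Icc_subset_Icc_right (htc.le.trans hcb))) ⟨ht, ha.le⟩
  exact (hrt.trans_lt htc).not_ge (hmin ⟨⟨har, hrt.trans (htc.le.trans hcb)⟩, hr⟩)

namespace NegFeedback

variable {f : ℝ → ℝ}

lemma neg_of_pos (hf : NegFeedback f) {x : ℝ} (hx : 0 < x) : f x < 0 :=
  neg_of_mul_neg_right (hf x hx.ne') hx.le

lemma eq_zero_of_apply_eq_zero (hf : NegFeedback f) {x : ℝ} (hx : f x = 0) : x = 0 := by
  by_contra hne
  simpa [hx] using hf x hne

end NegFeedback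

section Potential

variable {f : ℝ → ℝ}

lemma hasDerivAt_potential (hf : Continuous f) (x : ℝ) : HasDerivAt (potential f) (f x) x :=
  (hf.integral_hasStrictDerivAt 0 x).hasDerivAt

lemma even_potential (hodd : f.Odd) : (potential f).Even := fun x => by
  have hreflect : ∫ y in x..0, f (-y) = potential f (-x) := by
    rw [intervalIntegral.integral_comp_neg, neg_zero, potential]
  rw [← hreflect, funext hodd, intervalIntegral.integral_neg, intervalIntegral.integral_symm,
    neg_neg, potential]

lemma strictAntiOn_potential (hf : Continuous f) (hneg : NegFeedback f) :
    StrictAntiOn (potential f) (Ici 0) := by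
  refine strictAntiOn_of_deriv_neg (convex_Ici 0)
    (HasDerivAt.continuousOn fun x _ => hasDerivAt_potential hf x) fun x hx => ?_
  rw [interior_Ici] at hx
  rw [(hasDerivAt_potential hf x).deriv]
  exact hneg.neg_of_pos hx

lemma abs_eq_abs_of_potential_eq (hf : Continuous f) (hodd : f.Odd) (hneg : NegFeedback f)
    {x y : ℝ} (hxy : potential f x = potential f y) : |x| = |y| := by
  have habs (z : ℝ) : potential f |z| = potential f z := by
    rcases abs_choice z with hz | hz <;> simp only [hz, even_potential hodd z]
  refine (strictAntiOn_potential hf hneg).injOn (abs_nonneg x) (abs_nonneg y) ?_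
  rw [habs, habs, hxy]

end Potential

namespace QuarterTurnShift

variable {u v : ℝ → ℝ} {s : ℝ}

lemma snd_eq (h : QuarterTurnShift u v s) (t : ℝ) : v t = u (t - s) := by
  simpa using (h (t - s)).2

lemma add_two_mul (h : QuarterTurnShift u v s) (t : ℝ) :
    u (t + 2 * s) = -u t ∧ v (t + 2 * s) = -v t := by
  simp [two_mul, ← add_assoc, h _]

lemma periodic (h : QuarterTurnShift u v s) :
    Function.Periodic (fun t => (u t, v t)) (4 * s) := fun t => by
  rw [show t + 4 * s = t + 2 * s + 2 * s by ring]
  simp [h.add_two_mul]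

end QuarterTurnShift

namespace IsPlanarSolution

variable {f u v p q : ℝ → ℝ}

lemma continuous_fst (h : IsPlanarSolution f u v) : Continuous u :=
  continuous_iff_continuousAt.2 fun t => (h.hasDerivAt_fst t).continuousAt

lemma continuous_snd (h : IsPlanarSolution f u v) : Continuous v :=
  continuous_iff_continuousAt.2 fun t => (h.hasDerivAt_snd t).continuousAt

lemma zero (hf₀ : f 0 = 0) : IsPlanarSolution f (fun _ => 0) (fun _ => 0) where
  hasDerivAt_fst t := by simpa [hf₀] using hasDerivAt_const t (0 : ℝ)
  hasDerivAt_snd t := by simpa [hf₀] using hasDerivAt_const t (0 : ℝ)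

lemma comp_add_const (h : IsPlanarSolution f u v) (s : ℝ) :
    IsPlanarSolution f (fun t => u (t + s)) (fun t => v (t + s)) where
  hasDerivAt_fst t := (h.hasDerivAt_fst (t + s)).comp_add_const t s
  hasDerivAt_snd t := (h.hasDerivAt_snd (t + s)).comp_add_const t s

lemma quarterTurn (hodd : f.Odd) (h : IsPlanarSolution f u v) :
    IsPlanarSolution f (fun t => -v t) u where
  hasDerivAt_fst t := by simpa using (h.hasDerivAt_snd t).fun_neg
  hasDerivAt_snd t := by simpa [hodd (v t)] using h.hasDerivAt_fst t

lemma eq_of_apply_eq (hlip : LocallyLipschitz f) (h : IsPlanarSolution f u v)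
    (h' : IsPlanarSolution f p q) {t₀ : ℝ} (hu : u t₀ = p t₀) (hv : v t₀ = q t₀) (t : ℝ) :
    u t = p t ∧ v t = q t := by
  have hX : LocallyLipschitz fun z : ℝ × ℝ => (f z.2, -f z.1) :=
    (hlip.comp LipschitzWith.prod_snd.locallyLipschitz).prodMk
      (LipschitzWith.id.neg.locallyLipschitz.comp
        (hlip.comp LipschitzWith.prod_fst.locallyLipschitz))
  have heq : (fun t => (u t, v t)) = fun t => (p t, q t) :=
    eq_of_hasDerivAt_of_locallyLipschitz hX
      (fun t => (h.hasDerivAt_fst t).prodMk (h.hasDerivAt_snd t))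
      (fun t => (h'.hasDerivAt_fst t).prodMk (h'.hasDerivAt_snd t)) (Prod.ext hu hv)
  exact Prod.mk_inj.1 (congrFun heq t)

lemma eq_zero_of_apply_eq_zero (hlip : LocallyLipschitz f) (hf₀ : f 0 = 0)
    (h : IsPlanarSolution f u v) {t₀ : ℝ} (hu : u t₀ = 0) (hv : v t₀ = 0) (t : ℝ) :
    u t = 0 ∧ v t = 0 :=
  h.eq_of_apply_eq hlip (zero hf₀) hu hv t

lemma quarterTurnShift_of_apply_eq (hlip : LocallyLipschitz f) (hodd : f.Odd)
    (h : IsPlanarSolution f u v) {a b : ℝ} (hu : u b = -v a) (hv : v b = u a) :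
    QuarterTurnShift u v (b - a) :=
  (h.comp_add_const (b - a)).eq_of_apply_eq hlip (h.quarterTurn hodd) (t₀ := a)
    (by simpa using hu) (by simpa using hv)

lemma potential_add_potential_eq (hf : Continuous f) (h : IsPlanarSolution f u v) (a b : ℝ) :
    potential f (u a) + potential f (v a) = potential f (u b) + potential f (v b) := by
  have henergy (t : ℝ) : HasDerivAt (fun t => potential f (u t) + potential f (v t)) 0 t :=
    (((hasDerivAt_potential hf (u t)).comp t (h.hasDerivAt_fst t)).add
      ((hasDerivAt_potential hf (v t)).comp t (h.hasDerivAt_snd t))).congr_deriv (by ring)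
  exact is_const_of_deriv_eq_zero (fun t => (henergy t).differentiableAt)
    (fun t => (henergy t).deriv) a b

lemma abs_fst_eq_abs_snd (hf : Continuous f) (hodd : f.Odd) (hneg : NegFeedback f)
    (h : IsPlanarSolution f u v) {a b : ℝ} (ha : u a = 0) (hb : v b = 0) : |u b| = |v a| := by
  have henergy := h.potential_add_potential_eq hf b a
  rw [ha, hb, add_comm (potential f 0)] at henergy
  exact abs_eq_abs_of_potential_eq hf hodd hneg (add_right_cancel henergy)

lemma fst_neg_of_snd_pos (hneg : NegFeedback f) (h : IsPlanarSolution f u v) {a b : ℝ}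
    (ha : u a = 0) (hv : ∀ t ∈ Ico a b, 0 < v t) {t : ℝ} (ht : t ∈ Ioc a b) : u t < 0 := by
  have hanti : StrictAntiOn u (Icc a b) := by
    refine strictAntiOn_of_deriv_neg (convex_Icc a b) h.continuous_fst.continuousOn fun r hr => ?_
    rw [interior_Icc] at hr
    rw [(h.hasDerivAt_fst r).deriv]
    exact hneg.neg_of_pos (hv r (Ioo_subset_Ico_self hr))
  have hat := hanti (left_mem_Icc.2 (ht.1.le.trans ht.2)) (Ioc_subset_Icc_self ht) ht.1
  rwa [ha] at hat

lemma exists_snd_eq_zero (hneg : NegFeedback f) (h : IsPlanarSolution f u v) {a b : ℝ}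
    (hab : a < b) (hu : u a = u b) : ∃ c ∈ Ioo a b, v c = 0 := by
  obtain ⟨c, hc, hfc⟩ := exists_hasDerivAt_eq_zero hab h.continuous_fst.continuousOn hu
    fun t _ => h.hasDerivAt_fst t
  exact ⟨c, hc, hneg.eq_zero_of_apply_eq_zero hfc⟩

lemma exists_fst_eq_zero_snd_pos (hneg : NegFeedback f) (h : IsPlanarSolution f u v)
    (hne : ∀ t, u t = 0 → v t ≠ 0) {T : ℝ} (hT : T ≠ 0)
    (hv : Function.Periodic v T) {c : ℝ} (hc : v c = 0) : ∃ a, u a = 0 ∧ 0 < v a := by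
  obtain ⟨_, ⟨a, rfl⟩, hmax⟩ :=
    (hv.compact_of_continuous hT h.continuous_snd).exists_isGreatest (range_nonempty v)
  have hle (t : ℝ) : v t ≤ v a := hmax (mem_range_self t)
  have hlocal : IsLocalMax v a := .of_forall hle
  have hu : u a = 0 := hneg.eq_zero_of_apply_eq_zero
    (neg_eq_zero.1 (hlocal.hasDerivAt_eq_zero (h.hasDerivAt_snd a)))
  exact ⟨a, hu, (hc.symm.trans_le (hle c)).lt_of_ne' (hne a hu)⟩

lemma exists_quarterTurnShift (hlip : LocallyLipschitz f) (hodd : f.Odd) (hneg : NegFeedback f)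
    (h : IsPlanarSolution f u v) {a c : ℝ} (hac : a ≤ c) (hua : u a = 0) (hva : 0 < v a)
    (hvc : v c = 0) :
    ∃ s > 0, QuarterTurnShift u v s ∧ ∀ t ∈ Ico a (a + s), 0 < v t := by
  obtain ⟨b, ⟨hab, -⟩, hvb, hpos⟩ :=
    exists_eq_zero_forall_Ico_pos h.continuous_snd.continuousOn hac hva hvc
  have hub : u b < 0 := h.fst_neg_of_snd_pos hneg hua hpos (right_mem_Ioc.2 hab)
  have habs : |u b| = |v a| := h.abs_fst_eq_abs_snd hlip.continuous hodd hneg hua hvb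
  rw [abs_of_neg hub, abs_of_pos hva] at habs
  exact ⟨b - a, sub_pos.2 hab,
    h.quarterTurnShift_of_apply_eq hlip hodd (by linarith) (hvb.trans hua.symm),
    by rwa [add_sub_cancel]⟩

lemma two_mul_lt_of_periodic (hneg : NegFeedback f) (h : IsPlanarSolution f u v) {a s T : ℝ}
    (hshift : QuarterTurnShift u v s) (hua : u a = 0)
    (hpos : ∀ t ∈ Ico a (a + s), 0 < v t) (hT : 0 < T)
    (hper : Function.Periodic (fun t => (u t, v t)) T) : 2 * s < T := by
  obtain ⟨huT, hvT⟩ : u (a + T) = u a ∧ v (a + T) = v a := Prod.mk_inj.1 (hper a)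
  by_contra! hle
  rcases hle.eq_or_lt with rfl | hlt
  · linarith [(hshift.add_two_mul a).2, hpos a ⟨le_rfl, by linarith⟩]
  have hu : u (a + T) < 0 := by
    rcases le_or_gt T s with hTs | hsT
    · exact h.fst_neg_of_snd_pos hneg hua hpos ⟨by linarith, by linarith⟩
    · have hturn := (hshift (a + T - s)).1
      rw [sub_add_cancel] at hturn
      rw [hturn, neg_lt_zero]
      exact hpos _ ⟨by linarith, by linarith⟩
  linarith

lemma quarterTurnShift_of_minPeriod (hlip : LocallyLipschitz f) (hodd : f.Odd)
    (hneg : NegFeedback f) (h : IsPlanarSolution f u v) {T : ℝ}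
    (hper : MinPeriod (fun t => (u t, v t)) T) : QuarterTurnShift u v (T / 4) := by
  have hT : 0 < T := hper.1
  have hperiodic : Function.Periodic (fun t => (u t, v t)) T := hper.2.1
  have hne (t : ℝ) (hu : u t = 0) : v t ≠ 0 := fun hv =>
    hper.ne_const (0, 0) <| funext fun r =>
      Prod.mk_inj.2 (h.eq_zero_of_apply_eq_zero hlip hodd.map_zero hu hv r)
  have hzero (a : ℝ) : ∃ c ∈ Ioo a (a + T), v c = 0 :=
    h.exists_snd_eq_zero hneg (by linarith) (congrArg Prod.fst (hperiodic a)).symm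
  obtain ⟨a, hua, hva⟩ : ∃ a, u a = 0 ∧ 0 < v a := by
    obtain ⟨c, -, hc⟩ := hzero 0
    exact h.exists_fst_eq_zero_snd_pos hneg hne hT.ne' (hperiodic.comp Prod.snd) hc
  obtain ⟨c, hc, hvc⟩ := hzero a
  obtain ⟨s, hs, hshift, hpos⟩ := h.exists_quarterTurnShift hlip hodd hneg hc.1.le hua hva hvc
  have hsT : 2 * s < T := h.two_mul_lt_of_periodic hneg hshift hua hpos hT hperiodic
  have hTs : 4 * s = T :=
    hper.eq_of_periodic_of_lt_two_mul hshift.periodic (by linarith) (by linarith)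
  rwa [← hTs, mul_div_cancel_left₀ s four_ne_zero]

end IsPlanarSolution

lemma QuarterTurnShift.minPeriod_fst {u v : ℝ → ℝ} {s T : ℝ} (h : QuarterTurnShift u v s)
    (hper : MinPeriod (fun t => (u t, v t)) T) : MinPeriod u T := by
  obtain ⟨hT, hperiodic, hmin⟩ := hper
  refine ⟨hT, fun t => congrArg Prod.fst (hperiodic t), fun S hS hu => ?_⟩
  have hv (t : ℝ) : v (t + S) = v t := by
    rw [h.snd_eq, h.snd_eq, add_sub_right_comm, hu]
  exact hmin S hS fun t => Prod.ext (hu t) (hv t)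

theorem statement_5_general (f : ℝ → ℝ) (hlip : LocallyLipschitz f)
    (hodd : ∀ x : ℝ, f (-x) = -f x) (hfb : ∀ x : ℝ, x ≠ 0 → x * f x < 0)
    (u v : ℝ → ℝ) (T : ℝ)
    (hu : ∀ t : ℝ, HasDerivAt u (f (v t)) t)
    (hv : ∀ t : ℝ, HasDerivAt v (-f (u t)) t)
    (hper : MinPeriod (fun t => (u t, v t)) T) :
    (∀ t : ℝ, HasDerivAt u (f (u (t - T / 4))) t) ∧ MinPeriod u T ∧
      ∀ t : ℝ, u t = -u (t - T / 2) := by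
  have hshift : QuarterTurnShift u v (T / 4) :=
    IsPlanarSolution.quarterTurnShift_of_minPeriod hlip hodd hfb ⟨hu, hv⟩ hper
  refine ⟨fun t => ?_, hshift.minPeriod_fst hper, fun t => ?_⟩
  · rw [← hshift.snd_eq]
    exact hu t
  · convert (hshift.add_two_mul (t - T / 2)).1 using 2
    ring

theorem statement_5 (f : ℝ → ℝ) (hf : Continuous f) (hlip : LocallyLipschitz f)
    (hodd : ∀ x : ℝ, f (-x) = -f x) (hfb : ∀ x : ℝ, x ≠ 0 → x * f x < 0)
    (u v : ℝ → ℝ)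
    (hu : ∀ t : ℝ, HasDerivAt u (f (v t)) t)
    (hv : ∀ t : ℝ, HasDerivAt v (-f (u t)) t)
    (hnc : ∃ t s : ℝ, (u t, v t) ≠ (u s, v s))
    (hper : MinPeriod (fun t => (u t, v t)) 4) :
    (∀ t : ℝ, HasDerivAt u (f (u (t - 1))) t) ∧ MinPeriod u 4 ∧
      ∀ t : ℝ, u t = -u (t - 2) := by
  simpa [show (4 : ℝ) / 2 = 2 by norm_num] using
    statement_5_general f hlip hodd hfb u v 4 hu hv hper
end
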